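/- arXiv:1707.06128 — 11 statements merged into one kernel-verified Lean document; each statement's English description precedes it below -/
import Mathlib

section
/- Define g₁(φ) = −2 + 2(φ−π)/tan φ. For every r > 0 and every φ with π < φ < 2π and φ ≠ 3π/2, ∫_0^{φ−π} (r·sin(φ−θ−π)/2)·(r·cos(φ−θ−π) − r·sin(φ−θ−π)/tan φ) dθ = −(r²/8)·g₁(φ). -/
/-! With `u = φ - θ - π`, the integrand is `(r²/2)(sin u cos u - sin² u / tan φ)`, which has the
elementary primitive `-(r²/4)(sin² u - (u - sin u cos u) / tan φ)` in `θ`. It vanishes at `u = 0`,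
and at `u = φ - π` the relation `sin φ cos φ / tan φ = cos² φ` (valid as `sin φ ≠ 0` and
`cos φ ≠ 0`) merges the trigonometric terms into `sin² φ + cos² φ = 1`. -/

open Real

/-- With `g₁(φ) = −2 + 2(φ−π)/tan φ`, for every `r > 0` and every concave angle
`φ ∈ (π, 2π)`, `φ ≠ 3π/2`, the total overlap measure satisfies
`∫_0^{φ−π} (r sin(φ−θ−π)/2)(r cos(φ−θ−π) − r sin(φ−θ−π)/tan φ) dθ = −(r²/8) g₁(φ)`. -/
theorem overlap_integral_eq_g1 (r φ : ℝ) (hr : 0 < r)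
    (h1 : π < φ) (h2 : φ < 2 * π) (h3 : φ ≠ 3 * π / 2) :
    (∫ θ in (0:ℝ)..(φ - π),
        (r * Real.sin (φ - θ - π) / 2) *
          (r * Real.cos (φ - θ - π) - r * Real.sin (φ - θ - π) / Real.tan φ))
      = -(r ^ 2 / 8) * (-2 + 2 * (φ - π) / Real.tan φ) := by
  have hs : Real.sin φ ≠ 0 := by
    have h : 0 < Real.sin (φ - π) := Real.sin_pos_of_pos_of_lt_pi (by linarith) (by linarith)
    rw [Real.sin_sub_pi] at h
    linarith
  have hc : Real.cos φ ≠ 0 := by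
    intro h
    -- `φ - 3π/2` lies in `(-π/2, π/2)`, where `sin` vanishes only at `0`.
    have h' : Real.sin (φ - 3 * π / 2) = 0 := by
      have e : φ - 3 * π / 2 = (φ - π) - π / 2 := by ring
      rw [e, Real.sin_sub_pi_div_two, Real.cos_sub_pi, h]
      simp
    have := (Real.sin_eq_zero_iff_of_lt_of_lt (by linarith) (by linarith)).1 h'
    exact h3 (by linarith)
  have hderiv : ∀ θ ∈ Set.uIcc (0:ℝ) (φ - π),
      HasDerivAt (fun θ : ℝ => -(r ^ 2 / 4) * (Real.sin (φ - θ - π) ^ 2 -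
          ((φ - θ - π) - Real.sin (φ - θ - π) * Real.cos (φ - θ - π)) / Real.tan φ))
        ((r * Real.sin (φ - θ - π) / 2) *
          (r * Real.cos (φ - θ - π) - r * Real.sin (φ - θ - π) / Real.tan φ)) θ := by
    intro θ _
    have hu : HasDerivAt (fun θ : ℝ => φ - θ - π) (-1) θ :=
      ((hasDerivAt_id θ).const_sub φ).sub_const π
    have hF := (((hu.sin).pow 2).sub
      ((hu.sub (hu.sin.mul hu.cos)).div_const (Real.tan φ))).const_mul (-(r ^ 2 / 4))
    refine hF.congr_deriv ?_
    have hsq := Real.sin_sq_add_cos_sq (φ - θ - π)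
    simp only [Nat.cast_ofNat, Nat.add_one_sub_one, pow_one]
    linear_combination (r ^ 2 / 4 / Real.tan φ) * hsq
  rw [intervalIntegral.integral_eq_sub_of_hasDerivAt hderiv
    (Continuous.intervalIntegrable (by fun_prop) _ _)]
  have e0 : φ - (φ - π) - π = 0 := by ring
  have hsq := Real.sin_sq_add_cos_sq φ
  simp only [e0, sub_zero, Real.sin_zero, Real.sin_sub_pi, Real.cos_sub_pi]
  have ht : Real.sin φ * Real.cos φ / Real.tan φ = Real.cos φ ^ 2 := by
    rw [Real.tan_eq_sin_div_cos]
    field_simp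
  linear_combination (r ^ 2 / 4) * ht + (r ^ 2 / 4) * hsq
end

section
/- Let π < φ < 2π with φ ≠ 3π/2, l > 0, r > 0 with l·|sin φ| ≤ r. Set γ = l·sin(2π−φ)/r = −l·sin φ/r and ζ₁ = φ − π + arcsin(l·sin φ/r), and define g₁(φ) = −2 + 2(φ−π)/tan φ, g_{3,1} = −2γ² + (1/tan φ)·(2·arcsin γ − 2γ·√(1−γ²)), g_{3,3} = (l²·sin φ/2)·(ζ₁·cos φ − sin φ·(log|sin φ| − log γ)), and g₄ = l·r·(1 − cos ζ₁) − (r²/8)·g_{3,1} + g_{3,3}. Then −g₄ − (r²/8)·g₁(φ) = −l·r + r²/4 − (3l/4)·√(r² − (l·sin φ)²)·cos φ + (3/4)·(l·sin φ)² − r²·ζ₁/(4·tan φ) − (l²·ζ₁/2)·sin φ·cos φ + (log(r/l))·(l·sin φ)²/2. -/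
open Real

/-!
Write `A = arcsin (l sin φ / r)` and `S = √(r² - (l sin φ)²)`. Since `sin φ < 0`, we have
`arcsin γ = -A`, `√(1 - γ²) = S / r`, `log |sin φ| - log γ = log (r / l)`, and the addition formula
gives `r cos ζ₁ = l sin² φ - S cos φ`. After these substitutions the identity is linear in
`A`, `S` and `log (r / l)`, and the remaining quotient is removed by `sin φ / tan φ = cos φ`,
valid because `cos φ ≠ 0`.
-/

/-- With `γ = −l·sin φ/r`, `ζ₁ = φ − π + arcsin(l·sin φ/r)`,
`g₁ = −2 + 2(φ−π)/tan φ`,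
`g31 = −2γ² + (1/tan φ)(2 arcsin γ − 2γ√(1−γ²))`,
`g33 = (l² sin φ/2)(ζ₁ cos φ − sin φ (log|sin φ| − log γ))`, and
`g₄ = l r (1 − cos ζ₁) − (r²/8) g31 + g33`, the observable combination
`−g₄ − (r²/8) g₁` equals
`−l r + r²/4 − (3l/4)√(r² − (l sin φ)²) cos φ + (3/4)(l sin φ)² − r² ζ₁/(4 tan φ)
 − (l² ζ₁/2) sin φ cos φ + log(r/l)·(l sin φ)²/2`. -/
theorem Phi_eq (φ l r : ℝ) (h1 : π < φ) (h2 : φ < 2 * π) (h3 : φ ≠ 3 * π / 2)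
    (hl : 0 < l) (hr : 0 < r) (hlr : l * |Real.sin φ| ≤ r)
    (γ ζ₁ g₁ g31 g33 g₄ : ℝ)
    (hγ : γ = -l * Real.sin φ / r)
    (hζ₁ : ζ₁ = φ - π + Real.arcsin (l * Real.sin φ / r))
    (hg₁ : g₁ = -2 + 2 * (φ - π) / Real.tan φ)
    (hg31 : g31 = -2 * γ ^ 2 +
      (1 / Real.tan φ) * (2 * Real.arcsin γ - 2 * γ * Real.sqrt (1 - γ ^ 2)))
    (hg33 : g33 = (l ^ 2 * Real.sin φ / 2) *
      (ζ₁ * Real.cos φ - Real.sin φ * (Real.log |Real.sin φ| - Real.log γ)))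
    (hg₄ : g₄ = l * r * (1 - Real.cos ζ₁) - (r ^ 2 / 8) * g31 + g33) :
    -g₄ - (r ^ 2 / 8) * g₁
      = -(l * r) + r ^ 2 / 4
        - (3 * l / 4) * Real.sqrt (r ^ 2 - (l * Real.sin φ) ^ 2) * Real.cos φ
        + (3 / 4) * (l * Real.sin φ) ^ 2
        - r ^ 2 * ζ₁ / (4 * Real.tan φ)
        - (l ^ 2 * ζ₁ / 2) * Real.sin φ * Real.cos φ
        + Real.log (r / l) * (l * Real.sin φ) ^ 2 / 2 := by
  have hs : Real.sin φ < 0 := by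
    have := Real.sin_pos_of_pos_of_lt_pi (x := φ - π) (by linarith) (by linarith)
    rw [Real.sin_sub_pi] at this
    linarith
  have hc : Real.cos φ ≠ 0 := by
    intro h
    -- `φ - 3π/2` lies in `(-π/2, π/2)` and its sine is `cos φ`.
    have h4 : Real.sin (φ - 3 * π / 2) = 0 := by
      have h5 : φ - 3 * π / 2 = φ - π - π / 2 := by ring
      rw [h5, Real.sin_sub_pi_div_two, Real.cos_sub_pi, h]
      simp
    rw [Real.sin_eq_zero_iff_of_lt_of_lt (by linarith) (by linarith)] at h4
    exact h3 (by linarith)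
  have hγ' : γ = -(l * Real.sin φ / r) := by rw [hγ]; ring
  have hu : 1 - (l * Real.sin φ / r) ^ 2 = (r ^ 2 - (l * Real.sin φ) ^ 2) / r ^ 2 := by
    field_simp
  have hsqrt : Real.sqrt (1 - (l * Real.sin φ / r) ^ 2)
      = Real.sqrt (r ^ 2 - (l * Real.sin φ) ^ 2) / r := by
    rw [hu, Real.sqrt_div' _ (by positivity), Real.sqrt_sq hr.le]
  rw [abs_of_neg hs] at hlr
  have hsinA : Real.sin (Real.arcsin (l * Real.sin φ / r)) = l * Real.sin φ / r := by
    apply Real.sin_arcsin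
    · rw [le_div_iff₀ hr]; linarith
    · rw [div_le_iff₀ hr]; nlinarith
  have hcosζ : Real.cos ζ₁ = (l * Real.sin φ ^ 2
      - Real.sqrt (r ^ 2 - (l * Real.sin φ) ^ 2) * Real.cos φ) / r := by
    rw [hζ₁, Real.cos_add, Real.cos_sub_pi, Real.sin_sub_pi, hsinA, Real.cos_arcsin, hsqrt]
    ring
  have hlog : Real.log |Real.sin φ| - Real.log γ = Real.log (r / l) := by
    have hγ2 : γ = l * (-Real.sin φ) / r := by rw [hγ]; ring
    have hns : -Real.sin φ ≠ 0 := by linarith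
    rw [abs_of_neg hs, hγ2, Real.log_div (mul_ne_zero hl.ne' hns) hr.ne',
      Real.log_mul hl.ne' hns, Real.log_div hr.ne' hl.ne']
    ring
  have harc : Real.arcsin γ = -Real.arcsin (l * Real.sin φ / r) := by
    rw [hγ', Real.arcsin_neg]
  have hsq : Real.sqrt (1 - γ ^ 2) = Real.sqrt (r ^ 2 - (l * Real.sin φ) ^ 2) / r := by
    rw [hγ', neg_sq, hsqrt]
  rw [hg₄, hg₁, hg33, hg31, hlog, hcosζ, hsq, harc, hγ', hζ₁, Real.tan_eq_sin_div_cos]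
  generalize Real.sqrt (r ^ 2 - (l * Real.sin φ) ^ 2) = S
  generalize Real.arcsin (l * Real.sin φ / r) = A
  generalize Real.log (r / l) = L
  have hs' := hs.ne
  field_simp
  ring
end

section
/- Let π < φ < 2π with φ ≠ 3π/2 and l > 0. Define ζ₁(φ,l,r) = φ − π + arcsin(l·sin φ / r) and Φ(φ,l,r) = −l·r + r²/4 − (3l/4)·√(r² − (l·sin φ)²)·cos φ + (3/4)·(l·sin φ)² − r²·ζ₁(φ,l,r)/(4·tan φ) − (l²·ζ₁(φ,l,r)/2)·sin φ·cos φ + (log(r/l))·(l·sin φ)²/2. Then for every r with l·|sin φ| < r, the function r ↦ Φ(φ,l,r) is differentiable at r with derivative −l + r/2 − (l·cos φ/(2r))·√(r² − (l·sin φ)²) + (l·sin φ)²/(2r) − (r/(2·tan φ))·(φ − π + arcsin(l·sin φ/r)). -/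
open Real

/-!
Write `a = l sin φ` and `W = √(r² - a²)`, which is positive because `r > |a|`. The arcsine term has
derivative `-a / (r W)` in `r`. Since `a / tan φ = l cos φ`, differentiating `Φ` termwise leaves,
besides the terms already in the target, the quantity
`(l cos φ / W) (-3r/4 + r/4 + a²/(2r)) = -(l cos φ / (2r)) (r² - a²) / W`,
and `(r² - a²) / W = W`.
-/

/-- The arcsine derivative `(√(1 - (a/r)²))⁻¹ · (-a/r²)`, simplified for `r > 0`. -/
lemma hasDerivAt_arcsin_const_div {a r : ℝ} (h : |a| < r) :
    HasDerivAt (fun x : ℝ => arcsin (a / x)) (-(a / (r * √(r ^ 2 - a ^ 2)))) r := by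
  have hr : 0 < r := (abs_nonneg a).trans_lt h
  obtain ⟨hlo, hhi⟩ := abs_lt.mp h
  have hW : 0 < √(r ^ 2 - a ^ 2) := sqrt_pos.mpr (by nlinarith)
  have hd : HasDerivAt (fun x : ℝ => a / x) (-a / r ^ 2) r := by
    refine ((hasDerivAt_const r a).div (hasDerivAt_id' r) hr.ne').congr_deriv ?_
    ring
  have hne1 : a / r ≠ -1 := by
    intro h'; rw [div_eq_iff hr.ne'] at h'; linarith
  have hne2 : a / r ≠ 1 := by
    intro h'; rw [div_eq_iff hr.ne'] at h'; linarith
  have hs : √(1 - (a / r) ^ 2) = √(r ^ 2 - a ^ 2) / r := by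
    rw [← sqrt_sq hr.le, ← sqrt_div' _ (sq_nonneg r), sqrt_sq hr.le]
    congr 1
    field_simp
  refine ((hasDerivAt_arcsin hne1 hne2).comp r hd).congr_deriv ?_
  rw [hs]
  field_simp

/-- With `ζ₁(φ,l,r) = φ − π + arcsin(l sin φ / r)` and
`Φ(φ,l,r) = −l r + r²/4 − (3l/4)√(r² − (l sin φ)²) cos φ + (3/4)(l sin φ)²
 − r² ζ₁/(4 tan φ) − (l² ζ₁/2) sin φ cos φ + log(r/l)(l sin φ)²/2`,
for `π < φ < 2π`, `φ ≠ 3π/2`, `l > 0` and every `r > l·|sin φ|`, the function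
`r ↦ Φ(φ,l,r)` is differentiable at `r` with the stated derivative. -/
theorem hasDerivAt_Phi_r (φ l : ℝ) (h1 : π < φ) (h2 : φ < 2 * π) (h3 : φ ≠ 3 * π / 2)
    (hl : 0 < l) :
    ∀ r : ℝ, l * |Real.sin φ| < r →
      HasDerivAt (fun r : ℝ =>
          -(l * r) + r ^ 2 / 4
            - (3 * l / 4) * Real.sqrt (r ^ 2 - (l * Real.sin φ) ^ 2) * Real.cos φ
            + (3 / 4) * (l * Real.sin φ) ^ 2
            - r ^ 2 * (φ - π + Real.arcsin (l * Real.sin φ / r)) / (4 * Real.tan φ)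
            - (l ^ 2 * (φ - π + Real.arcsin (l * Real.sin φ / r)) / 2) *
                Real.sin φ * Real.cos φ
            + Real.log (r / l) * (l * Real.sin φ) ^ 2 / 2)
        (-l + r / 2
          - (l * Real.cos φ / (2 * r)) * Real.sqrt (r ^ 2 - (l * Real.sin φ) ^ 2)
          + (l * Real.sin φ) ^ 2 / (2 * r)
          - (r / (2 * Real.tan φ)) * (φ - π + Real.arcsin (l * Real.sin φ / r))) r := by
  intro r hlr
  have ha : |l * sin φ| < r := by rwa [abs_mul, abs_of_pos hl]
  have hr : 0 < r := (abs_nonneg _).trans_lt ha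
  have hsin : sin φ ≠ 0 := by
    have : 0 < sin (φ - π) := sin_pos_of_pos_of_lt_pi (by linarith) (by linarith)
    rw [sin_sub_pi] at this
    linarith
  have hcos : cos φ ≠ 0 := by
    intro hc
    have hpos : 0 < π := pi_pos
    obtain ⟨k, hk⟩ := cos_eq_zero_iff.mp hc
    have hk0 : (0 : ℝ) < k := by
      by_contra hcon
      nlinarith
    have hk2 : (k : ℝ) < 2 := by
      by_contra hcon
      nlinarith
    have hk0' : 0 < k := by exact_mod_cast hk0
    have hk2' : k < 2 := by exact_mod_cast hk2
    have hk1 : k = 1 := by omega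
    subst hk1
    apply h3
    rw [hk]
    push_cast
    ring
  have hrad : 0 < r ^ 2 - (l * sin φ) ^ 2 := by
    obtain ⟨hlo, hhi⟩ := abs_lt.mp ha
    nlinarith
  have hW : 0 < √(r ^ 2 - (l * sin φ) ^ 2) := sqrt_pos.mpr hrad
  have hWsq : √(r ^ 2 - (l * sin φ) ^ 2) ^ 2 = r ^ 2 - (l * sin φ) ^ 2 := sq_sqrt hrad.le
  have hid := hasDerivAt_id' r
  have hsq : HasDerivAt (fun x : ℝ => x ^ 2) (2 * r) r := by
    simpa using hasDerivAt_pow 2 r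
  have hsqrt := (hsq.sub_const ((l * sin φ) ^ 2)).sqrt hrad.ne'
  have hzeta := (hasDerivAt_arcsin_const_div ha).const_add (φ - π)
  have hlog := (hid.div_const l).log (div_pos hr hl).ne'
  have key := ((((((hid.const_mul l).neg.add (hsq.div_const 4)).sub
    ((hsqrt.const_mul (3 * l / 4)).mul_const (cos φ))).add_const
    ((3 / 4) * (l * sin φ) ^ 2)).sub ((hsq.mul hzeta).div_const (4 * tan φ))).sub
    (((((hzeta.const_mul (l ^ 2)).div_const 2).mul_const (sin φ)).mul_const (cos φ)))).add
    ((hlog.mul_const ((l * sin φ) ^ 2)).div_const 2)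
  refine key.congr_deriv ?_
  rw [tan_eq_sin_div_cos]
  generalize arcsin (l * sin φ / r) = A at *
  generalize √(r ^ 2 - (l * sin φ) ^ 2) = W at *
  generalize sin φ = s at *
  generalize cos φ = c at *
  field_simp
  linear_combination 4 * l * c * s * hWsq
end

section
/- Let π < φ < 2π with φ ≠ 3π/2 and r > 0. Then for every l > 0 with l·|sin φ| < r, the function l ↦ −l + r/2 − (l·cos φ/(2r))·√(r² − (l·sin φ)²) + (l·sin φ)²/(2r) − (r/(2·tan φ))·(φ − π + arcsin(l·sin φ/r)) is differentiable at l with derivative (1/r)·(−r + l·sin² φ − √(r² − (l·sin φ)²)·cos φ). -/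
/-!
Write `S = √(r² - (l sin φ)²) > 0`. Since `sin φ ≠ 0` on `(π, 2π)`, the prefactor `r / (2 tan φ)`
equals `r cos φ / (2 sin φ)`, and termwise differentiation gives
`-1 + l sin² φ / r + (cos φ / (2r)) (-S + (l sin φ)² / S - r² / S)`.
The last bracket is `-2S` because `S² = r² - (l sin φ)²`.
-/

open Real

/-- For `π < φ < 2π`, `φ ≠ 3π/2`, `r > 0` and every `l > 0` with `l·|sin φ| < r`, the
function
`l ↦ −l + r/2 − (l cos φ/(2r))√(r² − (l sin φ)²) + (l sin φ)²/(2r)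
     − (r/(2 tan φ))(φ − π + arcsin(l sin φ/r))`
(which is `∂Φ/∂r`) is differentiable at `l` with derivative
`(1/r)(−r + l sin² φ − √(r² − (l sin φ)²) cos φ)`. -/
theorem hasDerivAt_dPhidr_l (φ r : ℝ) (h1 : π < φ) (h2 : φ < 2 * π) (h3 : φ ≠ 3 * π / 2)
    (hr : 0 < r) :
    ∀ l : ℝ, 0 < l → l * |Real.sin φ| < r →
      HasDerivAt (fun l : ℝ =>
          -l + r / 2
            - (l * Real.cos φ / (2 * r)) * Real.sqrt (r ^ 2 - (l * Real.sin φ) ^ 2)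
            + (l * Real.sin φ) ^ 2 / (2 * r)
            - (r / (2 * Real.tan φ)) * (φ - π + Real.arcsin (l * Real.sin φ / r)))
        ((1 / r) * (-r + l * Real.sin φ ^ 2
          - Real.sqrt (r ^ 2 - (l * Real.sin φ) ^ 2) * Real.cos φ)) l := by
  intro l hl hlr
  have hs : sin φ ≠ 0 := by
    have : 0 < sin (φ - π) := sin_pos_of_pos_of_lt_pi (by linarith) (by linarith)
    rw [sin_sub_pi] at this
    linarith
  have habs : |l * sin φ| < r := by rwa [abs_mul, abs_of_pos hl]
  obtain ⟨hlo, hhi⟩ := abs_lt.mp habs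
  have hpos : 0 < r ^ 2 - (l * sin φ) ^ 2 := by nlinarith
  set S := √(r ^ 2 - (l * sin φ) ^ 2) with hS
  have hSpos : 0 < S := sqrt_pos.mpr hpos
  have hSsq : S ^ 2 = r ^ 2 - (l * sin φ) ^ 2 := sq_sqrt hpos.le
  have hlin : HasDerivAt (fun l : ℝ => l * sin φ) (sin φ) l := by
    simpa using (hasDerivAt_id l).mul_const (sin φ)
  have hsq : HasDerivAt (fun l : ℝ => (l * sin φ) ^ 2) (2 * (l * sin φ) * sin φ) l := by
    simpa using hlin.fun_pow 2
  have hsqrt : HasDerivAt (fun l : ℝ => √(r ^ 2 - (l * sin φ) ^ 2))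
      (-(2 * (l * sin φ) * sin φ) / (2 * S)) l :=
    (hsq.const_sub (r ^ 2)).sqrt hpos.ne'
  have hroot : √(1 - (l * sin φ / r) ^ 2) = S / r := by
    rw [← sqrt_sq (div_pos hSpos hr).le, div_pow S, hSsq]
    congr 1
    field_simp
  have harcsin : HasDerivAt (fun l : ℝ => arcsin (l * sin φ / r)) (sin φ / S) l := by
    have hne1 : l * sin φ / r ≠ -1 := ((lt_div_iff₀ hr).mpr (by linarith)).ne'
    have hne2 : l * sin φ / r ≠ 1 := ((div_lt_one hr).mpr hhi).ne
    have h := (hasDerivAt_arcsin hne1 hne2).comp l (hlin.div_const r)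
    rw [hroot] at h
    refine h.congr_deriv ?_
    field_simp
  have hcos : HasDerivAt (fun l : ℝ => l * cos φ / (2 * r)) (cos φ / (2 * r)) l := by
    simpa using ((hasDerivAt_id l).mul_const (cos φ)).div_const (2 * r)
  have htan : r / (2 * tan φ) = r * cos φ / (2 * sin φ) := by
    rw [tan_eq_sin_div_cos, mul_div_assoc', div_div_eq_mul_div]
  have h := (((((hasDerivAt_id l).neg.add_const (r / 2)).sub (hcos.mul hsqrt)).add
    (hsq.div_const (2 * r))).sub
    ((harcsin.const_add (φ - π)).const_mul (r / (2 * tan φ))))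
  refine h.congr_deriv ?_
  rw [htan, ← hS]
  -- Over the common denominator `2rS`, the `cos φ` terms combine through `S² = r² - (l sin φ)²`.
  field_simp
  linear_combination (cos φ) * hSsq
end

section
/- For every real φ, every l ≥ 0 and every r > 0 with l·|sin φ| ≤ r, one has −r + l·sin² φ − √(r² − (l·sin φ)²)·cos φ ≤ 0. -/
open Real

/-- For every real `φ`, every `l ≥ 0` and every `r > 0` with `l·|sin φ| ≤ r`, one has
`−r + l sin² φ − √(r² − (l sin φ)²)·cos φ ≤ 0`. -/
theorem mixed_deriv_nonpos (φ l r : ℝ) (hl : 0 ≤ l) (hr : 0 < r)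
    (hlr : l * |Real.sin φ| ≤ r) :
    -r + l * Real.sin φ ^ 2
      - Real.sqrt (r ^ 2 - (l * Real.sin φ) ^ 2) * Real.cos φ ≤ 0 := by
  have habs : |l * Real.sin φ| ≤ r := by rwa [abs_mul, abs_of_nonneg hl]
  have hb : Real.sqrt (r ^ 2 - (l * Real.sin φ) ^ 2) ^ 2 = r ^ 2 - (l * Real.sin φ) ^ 2 :=
    Real.sq_sqrt (sub_nonneg.2 (sq_le_sq' (abs_le.1 habs).1 (abs_le.1 habs).2))
  set a := l * Real.sin φ with ha
  set b := Real.sqrt (r ^ 2 - a ^ 2)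
  -- Cauchy–Schwarz for `(a, b)`, of norm `r`, and the unit vector `(sin φ, -cos φ)`,
  -- with the defect given by Lagrange's identity.
  have hlag : (a * Real.sin φ - b * Real.cos φ) ^ 2
      = r ^ 2 - (a * Real.cos φ + b * Real.sin φ) ^ 2 := by
    linear_combination (a ^ 2 + b ^ 2) * Real.sin_sq_add_cos_sq φ + hb
  have hcs : a * Real.sin φ - b * Real.cos φ ≤ r :=
    abs_le_of_sq_le_sq' (by nlinarith [sq_nonneg (a * Real.cos φ + b * Real.sin φ)]) hr.le |>.2
  have has : l * Real.sin φ ^ 2 = a * Real.sin φ := by rw [ha]; ring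
  linarith
end

section
/- For every y with −1 < y < 0 and all l, r with 0 < l ≤ r, one has (r²·y − 2·l²·y³)·√(1−y²) + l·y·(2y²−1)·√(r² − (l·y)²) + r²·(arcsin(l·y/r) − arcsin y) ≥ 0. -/
/-! With `a = arcsin y` and `b = arcsin (l y / r)`, so that `a ≤ b`, the expression collapses by the
double-angle formulas to `r² ((b - a) - sin (2 (b - a)) / 2)`, which is nonnegative because
`sin t ≤ t` for `t ≥ 0`. -/

/-- For every `y ∈ (−1, 0)` and all `0 < l ≤ r`, one has
`(r²y − 2l²y³)√(1−y²) + l y (2y²−1)√(r² − (ly)²) + r²(arcsin(ly/r) − arcsin y) ≥ 0`. -/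
theorem mixed_deriv_phi_r_nonneg_case1 (y l r : ℝ)
    (hy1 : -1 < y) (hy2 : y < 0) (hl : 0 < l) (hlr : l ≤ r) :
    0 ≤ (r ^ 2 * y - 2 * l ^ 2 * y ^ 3) * Real.sqrt (1 - y ^ 2)
        + l * y * (2 * y ^ 2 - 1) * Real.sqrt (r ^ 2 - (l * y) ^ 2)
        + r ^ 2 * (Real.arcsin (l * y / r) - Real.arcsin y) := by
  have hr : 0 < r := hl.trans_le hlr
  have hyz : y ≤ l * y / r := by
    rw [le_div_iff₀ hr]; nlinarith
  have hz0 : l * y / r ≤ 0 := div_nonpos_of_nonpos_of_nonneg (by nlinarith) hr.le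
  have hab := Real.arcsin_le_arcsin hyz
  have hsa : Real.sin (Real.arcsin y) = y := Real.sin_arcsin hy1.le (by linarith)
  have hsb : Real.sin (Real.arcsin (l * y / r)) = l * y / r :=
    Real.sin_arcsin (by linarith) (by linarith)
  have hca := Real.cos_arcsin y
  have hcb := Real.cos_arcsin (l * y / r)
  have hly : l * y = r * (l * y / r) := by field_simp
  have hsqrt : Real.sqrt (r ^ 2 - (l * y) ^ 2) = r * Real.sqrt (1 - (l * y / r) ^ 2) := by
    rw [← Real.sqrt_sq hr.le, ← Real.sqrt_mul (sq_nonneg r), Real.sqrt_sq hr.le]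
    congr 1
    field_simp
  have hpoly : r ^ 2 * y - 2 * l ^ 2 * y ^ 3 = r ^ 2 * (y - 2 * (l * y / r) ^ 2 * y) := by
    field_simp
  rw [hsqrt, hpoly, ← hca, ← hcb]
  generalize Real.arcsin (l * y / r) = b at *
  generalize Real.arcsin y = a at *
  rw [← hsb] at hly ⊢
  rw [hly, ← hsa]
  have hsin : Real.sin (2 * (b - a)) ≤ 2 * (b - a) := Real.sin_le (by linarith)
  have hexp : Real.sin (2 * (b - a)) =
      2 * Real.sin b * Real.cos b * (1 - 2 * Real.sin a ^ 2)
        - (1 - 2 * Real.sin b ^ 2) * (2 * Real.sin a * Real.cos a) := by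
    rw [mul_sub, Real.sin_sub, Real.sin_two_mul, Real.sin_two_mul, Real.cos_two_mul,
      Real.cos_two_mul, Real.cos_sq', Real.cos_sq']
    ring
  have hfin := mul_nonneg (sq_nonneg r) (sub_nonneg.2 hsin)
  rw [hexp] at hfin
  linarith
end

section
/- For every y with −1 < y < 0 and all l, r with 0 < l ≤ r, one has y·√(1−y²)·(1 − l·√(1−y²)/√(r² − (l·y)²)) + arcsin(l·y/r) − arcsin y ≥ 0. -/
/-!
Put `θ = arcsin y` and `φ = arcsin (l * y / r)`, so that `-π/2 < θ ≤ φ < 0` and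
`r * sin φ = l * sin θ`. The expression then collapses to
`(φ - θ) - (cos θ / cos φ) * sin (φ - θ)`, which is nonnegative because
`0 < cos θ ≤ cos φ` and `0 ≤ sin (φ - θ) ≤ φ - θ`.
-/

open Real

/-- For every `y ∈ (−1, 0)` and all `0 < l ≤ r`, one has
`y√(1−y²)(1 − l√(1−y²)/√(r² − (ly)²)) + arcsin(ly/r) − arcsin y ≥ 0`. -/
theorem g_nonneg (y l r : ℝ) (hy1 : -1 < y) (hy2 : y < 0) (hl : 0 < l) (hlr : l ≤ r) :
    0 ≤ y * Real.sqrt (1 - y ^ 2) *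
          (1 - l * Real.sqrt (1 - y ^ 2) / Real.sqrt (r ^ 2 - (l * y) ^ 2))
        + Real.arcsin (l * y / r) - Real.arcsin y := by
  have hr : 0 < r := hl.trans_le hlr
  have hyz : y ≤ l * y / r := by
    rw [le_div_iff₀ hr]; nlinarith
  have hz0 : l * y / r < 0 := div_neg_of_neg_of_pos (mul_neg_of_pos_of_neg hl hy2) hr
  have hsqrt : √(r ^ 2 - (l * y) ^ 2) = r * √(1 - (l * y / r) ^ 2) := by
    rw [show r ^ 2 - (l * y) ^ 2 = r ^ 2 * (1 - (l * y / r) ^ 2) by field_simp,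
      Real.sqrt_mul (sq_nonneg r), Real.sqrt_sq hr.le]
  rw [hsqrt, ← Real.cos_arcsin y, ← Real.cos_arcsin (l * y / r)]
  have hsθ : sin (arcsin y) = y := Real.sin_arcsin hy1.le (by linarith)
  have hsφ : sin (arcsin (l * y / r)) = l * y / r :=
    Real.sin_arcsin (by linarith) (by linarith)
  have hle : arcsin y ≤ arcsin (l * y / r) := Real.monotone_arcsin hyz
  have hθ : -(π / 2) < arcsin y := Real.neg_pi_div_two_lt_arcsin.2 hy1
  have hφ : arcsin (l * y / r) < 0 := Real.arcsin_lt_zero.2 hz0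
  generalize arcsin y = θ at *
  generalize arcsin (l * y / r) = φ at *
  have hcθ : 0 < cos θ := Real.cos_pos_of_mem_Ioo ⟨hθ, by linarith [Real.pi_pos]⟩
  have hcφ : 0 < cos φ :=
    Real.cos_pos_of_mem_Ioo ⟨by linarith, by linarith [Real.pi_pos]⟩
  have hcle : cos θ ≤ cos φ := by
    rw [← Real.cos_neg θ, ← Real.cos_neg φ]
    exact Real.cos_le_cos_of_nonneg_of_le_pi (by linarith) (by linarith [Real.pi_pos])
      (by linarith)
  have hrewrite : y * cos θ * (1 - l * cos θ / (r * cos φ)) + φ - θ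
      = (φ - θ) - cos θ / cos φ * sin (φ - θ) := by
    rw [Real.sin_sub, hsθ, hsφ]
    field_simp
    ring
  have hsin0 : 0 ≤ sin (φ - θ) :=
    Real.sin_nonneg_of_nonneg_of_le_pi (by linarith) (by linarith [Real.pi_pos])
  have hprod : cos θ / cos φ * sin (φ - θ) ≤ sin (φ - θ) :=
    mul_le_of_le_one_left hsin0 ((div_le_one hcφ).2 hcle)
  rw [hrewrite]
  linarith [Real.sin_le (sub_nonneg.2 hle)]
end

section
/- For every z with 0 < z < 1 and all l, r with 0 < l, 0 < r and l·z ≤ r, one has (r²·z − 2·l²·z³)·√(1−z²) + r·l·z·(1−2z²)·√(1 − (l·z/r)²) + r²·(arccos z + arccos(l·z/r)) ≥ 0. -/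
/-!
Write `z = cos a` and `l z / r = cos b` with `a, b ∈ [0, π/2]`. The double-angle formulas turn the
expression into `r² (a + b - (sin 2a cos 2b + cos 2a sin 2b) / 2)`, which by the addition formula
is `r² (s - sin (2 s) / 2)` with `s = a + b ≥ 0`. Nonnegativity is then `sin x ≤ x` at `x = 2 s`.
-/

open Real

/-- For every `z ∈ (0, 1)` and all `l > 0`, `r > 0` with `l·z ≤ r`, one has
`(r²z − 2l²z³)√(1−z²) + r l z (1−2z²)√(1 − (lz/r)²) + r²(arccos z + arccos(lz/r)) ≥ 0`. -/
theorem mixed_deriv_phi_r_nonneg_case2 (z l r : ℝ)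
    (hz1 : 0 < z) (hz2 : z < 1) (hl : 0 < l) (hr : 0 < r) (hlr : l * z ≤ r) :
    0 ≤ (r ^ 2 * z - 2 * l ^ 2 * z ^ 3) * Real.sqrt (1 - z ^ 2)
        + r * l * z * (1 - 2 * z ^ 2) * Real.sqrt (1 - (l * z / r) ^ 2)
        + r ^ 2 * (Real.arccos z + Real.arccos (l * z / r)) := by
  have hw0 : 0 ≤ l * z / r := by positivity
  have hw1 : l * z / r ≤ 1 := (div_le_one hr).2 hlr
  have hlz : l * z = l * z / r * r := by field_simp
  rw [← Real.sin_arccos, ← Real.sin_arccos]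
  set w := l * z / r with hw
  have hca : Real.cos (Real.arccos z) = z := Real.cos_arccos (by linarith) hz2.le
  have hcb : Real.cos (Real.arccos w) = w := Real.cos_arccos (by linarith) hw1
  have hsum : 0 ≤ 2 * (Real.arccos z + Real.arccos w) := by
    linarith [Real.arccos_nonneg z, Real.arccos_nonneg w]
  have hsin := Real.sin_le hsum
  rw [mul_add, Real.sin_add, Real.sin_two_mul, Real.sin_two_mul, Real.cos_two_mul,
    Real.cos_two_mul, hca, hcb] at hsin
  have hfactor : (r ^ 2 * z - 2 * l ^ 2 * z ^ 3) * Real.sin (Real.arccos z)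
        + r * l * z * (1 - 2 * z ^ 2) * Real.sin (Real.arccos w)
        + r ^ 2 * (Real.arccos z + Real.arccos w)
      = r ^ 2 * ((z - 2 * w ^ 2 * z) * Real.sin (Real.arccos z)
        + w * (1 - 2 * z ^ 2) * Real.sin (Real.arccos w)
        + (Real.arccos z + Real.arccos w)) := by
    linear_combination (-2 * z * (l * z + w * r) * Real.sin (Real.arccos z)
      + r * (1 - 2 * z ^ 2) * Real.sin (Real.arccos w)) * hlz
  rw [hfactor]
  exact mul_nonneg (sq_nonneg r) (by linarith)
end

section
/- For every z with 0 < z < 1 and all l ≥ 0, r > 0 with l·z ≤ r, one has r²·arccos z + (r²·z − 2·l²·z³)·√(1−z²) ≥ 0. -/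
open Real

/-- For every `z ∈ (0, 1)` and all `l ≥ 0`, `r > 0` with `l·z ≤ r`, one has
`r² arccos z + (r²z − 2l²z³)√(1−z²) ≥ 0`. -/
theorem arccos_bound_one (z l r : ℝ)
    (hz1 : 0 < z) (hz2 : z < 1) (hl : 0 ≤ l) (hr : 0 < r) (hlr : l * z ≤ r) :
    0 ≤ r ^ 2 * Real.arccos z
        + (r ^ 2 * z - 2 * l ^ 2 * z ^ 3) * Real.sqrt (1 - z ^ 2) := by
  -- `√(1 - z²) = sin (arccos z) ≤ arccos z`
  have hs : √(1 - z ^ 2) ≤ arccos z := by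
    rw [← sin_arccos]
    exact sin_le (arccos_nonneg z)
  have hsq : (l * z) ^ 2 ≤ r ^ 2 := by gcongr
  -- Since `l²z² ≤ r²`, the coefficient of the square root is at least `-r²z ≥ -r²`.
  have hcoef : -r ^ 2 ≤ r ^ 2 * z - 2 * l ^ 2 * z ^ 3 := by
    nlinarith [mul_le_mul_of_nonneg_right hsq hz1.le,
      mul_le_mul_of_nonneg_left hz2.le (sq_nonneg r)]
  have h₁ := mul_le_mul_of_nonneg_right hcoef (sqrt_nonneg (1 - z ^ 2))
  have h₂ := mul_le_mul_of_nonneg_left hs (sq_nonneg r)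
  linarith
end

section
/- For every φ with π < φ ≤ 3π/2 and all l, r with 0 < l ≤ r, one has r + √(r² − (l·sin φ)²)·cos φ − l·(1 + log(r/l))·sin² φ + l·(φ − π + arcsin(l·sin φ/r))·sin φ·cos φ ≥ 0. -/
open Real

/-!
Put `θ = φ - π ∈ (0, π/2]`, `s = sin θ`, `c = cos θ ≥ 0` and `x = r / l ≥ 1`. Dividing the
expression by `l` gives
`f x = x - c √(x² - s²) - (1 + log x) s² + (θ - arcsin (s / x)) s c`.
Here `f 1 = 1 - c² - s² = 0`, since `arcsin s = θ`, and for `x > 1`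
`x * f' x = x - (c √(x² - s²) + s * s)`, which is nonnegative by the Cauchy–Schwarz inequality
for the vectors `(c, s)` and `(√(x² - s²), s)`, of norms `1` and `x`. So `f` is monotone on
`[1, ∞)` and `f x ≥ f 1 = 0`.
-/

/-- The expression of the theorem divided by `l`, as a function of `x = r / l`, with
`s = sin (φ - π)`, `c = cos (φ - π)` and `θ = φ - π`. -/
noncomputable def scaledPsiDeriv (θ s c x : ℝ) : ℝ :=
  x - c * √(x ^ 2 - s ^ 2) - (1 + log x) * s ^ 2 + (θ - arcsin (s / x)) * (s * c)

lemma hasDerivAt_scaledPsiDeriv (θ s c x : ℝ) (hs0 : 0 ≤ s) (hs1 : s ≤ 1) (hx : 1 < x) :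
    HasDerivAt (scaledPsiDeriv θ s c) ((x - (c * √(x ^ 2 - s ^ 2) + s * s)) / x) x := by
  have hx0 : 0 < x := by linarith
  have hpos : 0 < x ^ 2 - s ^ 2 := by nlinarith
  have hq0 : 0 < √(x ^ 2 - s ^ 2) := sqrt_pos.2 hpos
  have hq2 : √(x ^ 2 - s ^ 2) ^ 2 = x ^ 2 - s ^ 2 := sq_sqrt hpos.le
  have hsx0 : 0 ≤ s / x := by positivity
  have hsx1 : s / x < 1 := by rw [div_lt_one hx0]; linarith
  have hroot : √(1 - (s / x) ^ 2) = √(x ^ 2 - s ^ 2) / x := by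
    rw [show 1 - (s / x) ^ 2 = (x ^ 2 - s ^ 2) / x ^ 2 by field_simp,
      sqrt_div hpos.le, sqrt_sq hx0.le]
  have d1 : HasDerivAt (fun y : ℝ => √(y ^ 2 - s ^ 2)) (2 * x / (2 * √(x ^ 2 - s ^ 2))) x := by
    have h : HasDerivAt (fun y : ℝ => y ^ 2 - s ^ 2) (2 * x) x := by
      simpa using (hasDerivAt_pow 2 x).sub_const (s ^ 2)
    exact h.sqrt hpos.ne'
  have d2 : HasDerivAt (fun y : ℝ => s / y) (-s / x ^ 2) x :=
    ((hasDerivAt_const x s).div (hasDerivAt_id x) hx0.ne').congr_deriv (by simp)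
  have d3 : HasDerivAt (fun y : ℝ => arcsin (s / y)) (1 / √(1 - (s / x) ^ 2) * (-s / x ^ 2)) x :=
    (hasDerivAt_arcsin (by linarith) hsx1.ne).comp x d2
  have d4 := (((hasDerivAt_id x).sub (d1.const_mul c)).sub
    (((hasDerivAt_log hx0.ne').const_add 1).mul_const (s ^ 2))).add
    ((d3.const_sub θ).mul_const (s * c))
  refine d4.congr_deriv ?_
  rw [hroot]
  field_simp
  linear_combination c * hq2

lemma scaledPsiDeriv_nonneg (θ x : ℝ) (h0 : 0 ≤ θ) (h1 : θ ≤ π / 2) (hx : 1 ≤ x) :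
    0 ≤ scaledPsiDeriv θ (sin θ) (cos θ) x := by
  have hs0 : 0 ≤ sin θ := sin_nonneg_of_nonneg_of_le_pi h0 (by linarith [pi_pos])
  have hs1 : sin θ ≤ 1 := sin_le_one θ
  have hc0 : 0 ≤ cos θ := cos_nonneg_of_neg_pi_div_two_le_of_le (by linarith [pi_pos]) h1
  have hsc : sin θ ^ 2 + cos θ ^ 2 = 1 := sin_sq_add_cos_sq θ
  have hone : scaledPsiDeriv θ (sin θ) (cos θ) 1 = 0 := by
    have hroot : √(1 ^ 2 - sin θ ^ 2) = cos θ := by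
      rw [show (1 : ℝ) ^ 2 - sin θ ^ 2 = cos θ ^ 2 by linarith, sqrt_sq hc0]
    have hasin : arcsin (sin θ) = θ := arcsin_sin (by linarith [pi_pos]) h1
    simp only [scaledPsiDeriv, hroot, div_one, hasin, log_one]
    linarith
  have hcont : ContinuousOn (scaledPsiDeriv θ (sin θ) (cos θ)) (Set.Ici 1) := by
    have hne : ∀ y ∈ Set.Ici (1 : ℝ), y ≠ 0 := fun y hy => by
      have : (1 : ℝ) ≤ y := hy
      linarith
    have hlog : ContinuousOn log (Set.Ici 1) := continuousOn_log.mono hne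
    have hasin : ContinuousOn (fun y : ℝ => arcsin (sin θ / y)) (Set.Ici 1) :=
      continuous_arcsin.comp_continuousOn (continuousOn_const.div continuousOn_id hne)
    unfold scaledPsiDeriv
    fun_prop
  have hmono : MonotoneOn (scaledPsiDeriv θ (sin θ) (cos θ)) (Set.Ici 1) := by
    refine monotoneOn_of_hasDerivWithinAt_nonneg (convex_Ici 1) hcont
      (fun y hy => (hasDerivAt_scaledPsiDeriv θ _ _ y hs0 hs1
        (by simpa using hy)).hasDerivWithinAt) ?_
    intro y hy
    have hy1 : 1 < y := by simpa using hy
    have hq2 : √(y ^ 2 - sin θ ^ 2) ^ 2 = y ^ 2 - sin θ ^ 2 := sq_sqrt (by nlinarith)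
    refine div_nonneg (sub_nonneg.2 (abs_le_of_sq_le_sq' ?_ (by linarith)).2) (by linarith)
    -- Lagrange's identity: the defect in Cauchy–Schwarz is the square of the cross product.
    have hlag : (cos θ * √(y ^ 2 - sin θ ^ 2) + sin θ * sin θ) ^ 2
        + (cos θ * sin θ - sin θ * √(y ^ 2 - sin θ ^ 2)) ^ 2
        = (sin θ ^ 2 + cos θ ^ 2) * (√(y ^ 2 - sin θ ^ 2) ^ 2 + sin θ ^ 2) := by ring
    rw [hsc, hq2] at hlag
    nlinarith [sq_nonneg (cos θ * sin θ - sin θ * √(y ^ 2 - sin θ ^ 2))]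
  exact hone ▸ hmono (Set.mem_Ici.2 le_rfl) (Set.mem_Ici.2 hx) hx

/-- For every concave angle `φ ∈ (π, 3π/2]` and all `0 < l ≤ r`, one has
`r + √(r² − (l sin φ)²) cos φ − l(1 + log(r/l)) sin² φ
  + l(φ − π + arcsin(l sin φ/r)) sin φ cos φ ≥ 0`. -/
theorem Psi_deriv_nonneg_case1 (φ l r : ℝ)
    (h1 : π < φ) (h2 : φ ≤ 3 * π / 2) (hl : 0 < l) (hlr : l ≤ r) :
    0 ≤ r + Real.sqrt (r ^ 2 - (l * Real.sin φ) ^ 2) * Real.cos φ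
        - l * (1 + Real.log (r / l)) * Real.sin φ ^ 2
        + l * (φ - π + Real.arcsin (l * Real.sin φ / r)) * Real.sin φ * Real.cos φ := by
  obtain ⟨θ, rfl⟩ : ∃ θ, φ = θ + π := ⟨φ - π, by ring⟩
  obtain ⟨x, rfl⟩ : ∃ x, r = l * x := ⟨r / l, by field_simp⟩
  have hx : 1 ≤ x := by nlinarith
  have key := mul_nonneg hl.le
    (scaledPsiDeriv_nonneg θ x (by linarith) (by linarith) hx)
  have hroot : √((l * x) ^ 2 - (l * -sin θ) ^ 2) = l * √(x ^ 2 - sin θ ^ 2) := by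
    rw [show (l * x) ^ 2 - (l * -sin θ) ^ 2 = l ^ 2 * (x ^ 2 - sin θ ^ 2) by ring,
      sqrt_mul (sq_nonneg l), sqrt_sq hl.le]
  have harg : l * -sin θ / (l * x) = -(sin θ / x) := by
    rw [mul_div_mul_left _ _ hl.ne', neg_div]
  rw [sin_add_pi, cos_add_pi, hroot, harg, arcsin_neg, mul_div_cancel_left₀ x hl.ne']
  unfold scaledPsiDeriv at key
  linarith
end

section
/- For every z with 0 < z < 1 and all l, r with 0 < l, 0 < r and l·z ≤ r, one has r + √(r² − (l·z)²)·√(1−z²) − l·z²·(1 + log(r/l)) + l·z·√(1−z²)·(arccos z + arccos(l·z/r)) ≥ 0. -/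
open Real

/-- For every `z ∈ (0, 1)` and all `l > 0`, `r > 0` with `l·z ≤ r`, one has
`r + √(r² − (lz)²)√(1−z²) − l z²(1 + log(r/l)) + l z √(1−z²)(arccos z + arccos(lz/r)) ≥ 0`. -/
theorem Psi_deriv_nonneg_case2 (z l r : ℝ)
    (hz1 : 0 < z) (hz2 : z < 1) (hl : 0 < l) (hr : 0 < r) (hlr : l * z ≤ r) :
    0 ≤ r + Real.sqrt (r ^ 2 - (l * z) ^ 2) * Real.sqrt (1 - z ^ 2)
        - l * z ^ 2 * (1 + Real.log (r / l))
        + l * z * Real.sqrt (1 - z ^ 2) *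
            (Real.arccos z + Real.arccos (l * z / r)) := by
  -- `1 + log x ≤ x` at `x = r / l` bounds the only negative term by `z² r ≤ r`.
  have hlog : 1 + Real.log (r / l) ≤ r / l := by
    linarith [Real.log_le_sub_one_of_pos (div_pos hr hl)]
  have h1 : l * z ^ 2 * (1 + Real.log (r / l)) ≤ r :=
    calc l * z ^ 2 * (1 + Real.log (r / l)) ≤ l * z ^ 2 * (r / l) := by gcongr
      _ = z ^ 2 * r := by field_simp
      _ ≤ r := mul_le_of_le_one_left hr.le (pow_le_one₀ hz1.le hz2.le)
  have h2 : 0 ≤ Real.sqrt (r ^ 2 - (l * z) ^ 2) * Real.sqrt (1 - z ^ 2) := by positivity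
  have h3 : 0 ≤ l * z * Real.sqrt (1 - z ^ 2) *
      (Real.arccos z + Real.arccos (l * z / r)) :=
    mul_nonneg (by positivity)
      (add_nonneg (Real.arccos_nonneg _) (Real.arccos_nonneg _))
  linarith
end
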